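/- (Theorem 2, existence of a shortest informative experiment.) Let (A_true, B_true, C_true, D_true) be a minimal discrete-time linear system with n_true states, m inputs, p outputs, and lag ℓ_true, let L and N satisfy ℓ_true ≤ L and n_true ≤ N, and let x_0 ∈ ℝ^{n_true} be an arbitrary initial state. Set L^a := min(L, N − n_true + ℓ_true) and T := L^a + (L^a+1)m + n_true. Then there exists an input sequence u(0),...,u(T−1) ∈ ℝ^m such that the data (u_{[0,T−1]}, y_{[0,T−1]}), where y is the output of the true system starting from x(0) = x_0 under this input, are informative for system identification. -/

import Mathlib

/-!
Write `K` for `min L (N - n + ℓ)`, where `n` and `ℓ` are the order and lag of the true system.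

*Input design.* A window is a state together with the next `K + 1` inputs, a vector of dimension
`n + (K + 1) m`. The input is built one step at a time so that the successive windows stay linearly
independent (`exists_input`). If no choice of the newest input `u (t + K)` made the window at time
`t` independent of the earlier ones, the span `W` of these would contain the last input block and be
invariant under the shift of windows; controllability then forces `W` to be the whole space
(`windowShift_eq_top`), which has dimension greater than `t`. An experiment of length
`K + (K + 1) m + n` thus yields a basis of the space of windows.

*Identification.* As the windows span, every length-`(K + 1)` trajectory of the true system is a
trajectory of any explaining system (`behaviourLE_of_span`). Comparing the ranks of the
observability matrices with `ℓ` block rows, and using that the rank grows with each block row up to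
the lag, an explaining system with at most `N` states and lag at most `L` has lag at most `K`
(`BehaviourLE.lag_le`). So both systems are determined by windows of length `K`: matching free
responses defines an injective linear state map `S` intertwining `A` and `C`; zero-state
trajectories are matched by the zero state only (`BehaviourLE.zero`), so `D` agrees and `S`
intertwines `B`; and `S` is onto because its range is invariant and contains the range of the input
matrix of a controllable system (`BehaviourLE.isomorphic`).
-/

open Matrix

/-- The Hankel matrix with `rows` block rows and `cols` columns built from the
vector sequence `f` (starting at time `0`): the block entry in block row `r` and
column `c` is `f (r + c)`.  Thus `H_k(f_{[0,t-1]}) = hankel f (k+1) (t-k)`. -/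
def hankel {d : ℕ} (f : ℕ → Fin d → ℝ) (rows cols : ℕ) :
    Matrix (Fin rows × Fin d) (Fin cols) ℝ :=
  Matrix.of fun r c => f ((r.1 : ℕ) + (c : ℕ)) r.2

/-- `u_{[0,t-1]}` is persistently exciting of order `k+1`, i.e. the Hankel
matrix `H_k(u_{[0,t-1]})` (with `k+1` block rows) has full row rank. -/
def PersistentlyExciting {m : ℕ} (u : ℕ → Fin m → ℝ) (t k : ℕ) : Prop :=
  (hankel u (k + 1) (t - k)).rank = (k + 1) * m

/-- The Hankel matrix `H_{k,t}`: `H_k(y_{[0,t-1]})` stacked on top of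
`H_k(u_{[0,t-1]})`. -/
def Hkt {m p : ℕ} (u : ℕ → Fin m → ℝ) (y : ℕ → Fin p → ℝ) (k t : ℕ) :
    Matrix ((Fin (k + 1) × Fin p) ⊕ (Fin (k + 1) × Fin m)) (Fin (t - k)) ℝ :=
  Matrix.fromRows (hankel y (k + 1) (t - k)) (hankel u (k + 1) (t - k))

/-- The matrix `G_{k,t}`: `H_{k-1}(y_{[0,t-2]})` (which has `k` block rows and
`t-k` columns) stacked on top of `H_k(u_{[0,t-1]})`. -/
def Gkt {m p : ℕ} (u : ℕ → Fin m → ℝ) (y : ℕ → Fin p → ℝ) (k t : ℕ) :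
    Matrix ((Fin k × Fin p) ⊕ (Fin (k + 1) × Fin m)) (Fin (t - k)) ℝ :=
  Matrix.fromRows (hankel y k (t - k)) (hankel u (k + 1) (t - k))

/-- `δ_{k,t} = rank H_{k,t} - rank G_{k,t}`. -/
noncomputable def deltaKT {m p : ℕ} (u : ℕ → Fin m → ℝ) (y : ℕ → Fin p → ℝ) (k t : ℕ) : ℕ :=
  (Hkt u y k t).rank - (Gkt u y k t).rank

/-- `q_t`: the smallest `k ∈ [0, t-1]` with `δ_{k,t} = 0`. -/
noncomputable def qT {m p : ℕ} (u : ℕ → Fin m → ℝ) (y : ℕ → Fin p → ℝ) (t : ℕ) : ℕ :=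
  sInf {k | k ≤ t - 1 ∧ deltaKT u y k t = 0}

/-- A discrete-time linear system `(A, B, C, D)` with `m` inputs, `p` outputs
and `n` states. -/
structure LinSys (m p : ℕ) where
  n : ℕ
  A : Matrix (Fin n) (Fin n) ℝ
  B : Matrix (Fin n) (Fin m) ℝ
  C : Matrix (Fin p) (Fin n) ℝ
  D : Matrix (Fin p) (Fin m) ℝ

/-- `obsMat sys k` is the observability matrix `Ω_{k-1}` with `k` block rows,
stacking `C, CA, ..., CA^(k-1)`. -/
def obsMat {m p : ℕ} (sys : LinSys m p) (k : ℕ) :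
    Matrix (Fin k × Fin p) (Fin sys.n) ℝ :=
  Matrix.of fun r j => (sys.C * sys.A ^ (r.1 : ℕ)) r.2 j

/-- The lag `ℓ(C,A)`: the smallest `k ≥ 0` with `rank Ω_k = rank Ω_{k-1}`. -/
noncomputable def lag {m p : ℕ} (sys : LinSys m p) : ℕ :=
  sInf {k | (obsMat sys (k + 1)).rank = (obsMat sys k).rank}

/-- The controllability matrix with `k` blocks `[B, AB, ..., A^(k-1)B]`. -/
def ctrlMat {m p : ℕ} (sys : LinSys m p) (k : ℕ) :
    Matrix (Fin sys.n) (Fin k × Fin m) ℝ :=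
  Matrix.of fun i c => (sys.A ^ (c.1 : ℕ) * sys.B) i c.2

def Observable {m p : ℕ} (sys : LinSys m p) : Prop :=
  (obsMat sys sys.n).rank = sys.n

def Controllable {m p : ℕ} (sys : LinSys m p) : Prop :=
  (ctrlMat sys sys.n).rank = sys.n

def MinimalSys {m p : ℕ} (sys : LinSys m p) : Prop :=
  Controllable sys ∧ Observable sys

/-- The system explains the data `(u_{[0,t-1]}, y_{[0,t-1]})` with the
compatible state sequence `x`. -/
def ExplainsWith {m p : ℕ} (sys : LinSys m p) (t : ℕ) (u : ℕ → Fin m → ℝ)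
    (y : ℕ → Fin p → ℝ) (x : ℕ → Fin sys.n → ℝ) : Prop :=
  ∀ s < t, x (s + 1) = sys.A.mulVec (x s) + sys.B.mulVec (u s) ∧
    y s = sys.C.mulVec (x s) + sys.D.mulVec (u s)

/-- The system explains (equivalently, generates) the data
`(u_{[0,t-1]}, y_{[0,t-1]})`. -/
def Explains {m p : ℕ} (sys : LinSys m p) (t : ℕ) (u : ℕ → Fin m → ℝ)
    (y : ℕ → Fin p → ℝ) : Prop :=
  ∃ x : ℕ → Fin sys.n → ℝ, ExplainsWith sys t u y x

/-- `ℰ_t`, the set of systems explaining the data. -/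
def ExplSet {m p : ℕ} (t : ℕ) (u : ℕ → Fin m → ℝ) (y : ℕ → Fin p → ℝ) :
    Set (LinSys m p) :=
  {sys | Explains sys t u y}

/-- `ℓ_min,t`: the smallest lag among explaining systems. -/
noncomputable def lMin {m p : ℕ} (t : ℕ) (u : ℕ → Fin m → ℝ) (y : ℕ → Fin p → ℝ) : ℕ :=
  sInf {ℓ | ∃ sys : LinSys m p, Explains sys t u y ∧ lag sys = ℓ}

/-- `n_min,t`: the smallest state dimension among explaining systems. -/
noncomputable def nMin {m p : ℕ} (t : ℕ) (u : ℕ → Fin m → ℝ) (y : ℕ → Fin p → ℝ) : ℕ :=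
  sInf {n | ∃ sys : LinSys m p, Explains sys t u y ∧ sys.n = n}

/-- Two systems are isomorphic: `D₁ = D₂` and there is an invertible state
transformation `S` with `S A₁ = A₂ S`, `S B₁ = B₂`, `C₁ = C₂ S`. -/
def Isomorphic {m p : ℕ} (s1 s2 : LinSys m p) : Prop :=
  s1.D = s2.D ∧ ∃ (S : Matrix (Fin s2.n) (Fin s1.n) ℝ)
    (S' : Matrix (Fin s1.n) (Fin s2.n) ℝ),
    S * S' = 1 ∧ S' * S = 1 ∧ S * s1.A = s2.A * S ∧ S * s1.B = s2.B ∧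
    s1.C = s2.C * S

/-- `M`, the set of minimal systems. -/
def Mset (m p : ℕ) : Set (LinSys m p) := {sys | MinimalSys sys}

/-- `S_{L,N}`, the set of systems with lag at most `L` and at most `N` states. -/
def SLN (m p L N : ℕ) : Set (LinSys m p) := {sys | lag sys ≤ L ∧ sys.n ≤ N}

/-- The data `(u_{[0,t-1]}, y_{[0,t-1]})` are informative for system
identification (with prior bounds `L`, `N`, and true state dimension `nTrue`). -/
def Informative {m p : ℕ} (t : ℕ) (u : ℕ → Fin m → ℝ) (y : ℕ → Fin p → ℝ)
    (nTrue L N : ℕ) : Prop :=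
  (ExplSet t u y ∩ Mset m p ∩ SLN m p L N =
      {sys ∈ ExplSet t u y | sys.n = nTrue} ∩ Mset m p ∩ SLN m p L N) ∧
  ∀ s1 ∈ ExplSet t u y ∩ Mset m p ∩ SLN m p L N,
    ∀ s2 ∈ ExplSet t u y ∩ Mset m p ∩ SLN m p L N, Isomorphic s1 s2
/-! ### Trajectories -/

/-- The state at time `k` when `sys` starts in `x` and is driven by `u`. -/
def traj {m p : ℕ} (sys : LinSys m p) (x : Fin sys.n → ℝ) (u : ℕ → Fin m → ℝ) :
    ℕ → Fin sys.n → ℝ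
  | 0 => x
  | k + 1 => sys.A *ᵥ traj sys x u k + sys.B *ᵥ u k

/-- The output at time `k` when `sys` starts in `x` and is driven by `u`. -/
def outp {m p : ℕ} (sys : LinSys m p) (x : Fin sys.n → ℝ) (u : ℕ → Fin m → ℝ) (k : ℕ) :
    Fin p → ℝ :=
  sys.C *ᵥ traj sys x u k + sys.D *ᵥ u k

lemma traj_sub {m p : ℕ} (sys : LinSys m p) (x z : Fin sys.n → ℝ) (u : ℕ → Fin m → ℝ) (k : ℕ) :
    traj sys x u k - traj sys z u k = (sys.A ^ k) *ᵥ (x - z) := by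
  induction k with
  | zero => simp [traj]
  | succ k ih =>
    rw [pow_succ', ← mulVec_mulVec, ← ih, mulVec_sub]
    simp only [traj]
    abel

lemma outp_sub {m p : ℕ} (sys : LinSys m p) (x z : Fin sys.n → ℝ) (u : ℕ → Fin m → ℝ) (k : ℕ) :
    outp sys x u k - outp sys z u k = (sys.C * sys.A ^ k) *ᵥ (x - z) := by
  rw [← mulVec_mulVec, ← traj_sub sys x z u, mulVec_sub]
  simp only [outp]
  abel

lemma traj_congr {m p : ℕ} (sys : LinSys m p) (x : Fin sys.n → ℝ) (u w : ℕ → Fin m → ℝ) (k : ℕ)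
    (h : ∀ i < k, u i = w i) : traj sys x u k = traj sys x w k := by
  induction k with
  | zero => rfl
  | succ k ih =>
    simp only [traj]
    rw [ih fun i hi => h i (by omega), h k (by omega)]

lemma outp_congr {m p : ℕ} (sys : LinSys m p) (x : Fin sys.n → ℝ) (u w : ℕ → Fin m → ℝ) (k : ℕ)
    (h : ∀ i ≤ k, u i = w i) : outp sys x u k = outp sys x w k := by
  simp only [outp]
  rw [traj_congr sys x u w k fun i hi => h i hi.le, h k le_rfl]

lemma traj_zero {m p : ℕ} (sys : LinSys m p) (k : ℕ) :
    traj sys 0 (fun _ => 0) k = 0 := by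
  induction k with
  | zero => rfl
  | succ k ih => simp [traj, ih]

lemma outp_zero_input {m p : ℕ} (sys : LinSys m p) (x : Fin sys.n → ℝ) (k : ℕ) :
    outp sys x (fun _ => 0) k = (sys.C * sys.A ^ k) *ᵥ x := by
  have h := outp_sub sys x 0 (fun _ => 0) k
  have h0 : outp sys 0 (fun _ => 0) k = 0 := by simp [outp, traj_zero]
  simpa [h0] using h

lemma traj_succ {m p : ℕ} (sys : LinSys m p) (x : Fin sys.n → ℝ) (u : ℕ → Fin m → ℝ) (k : ℕ) :
    traj sys x u (k + 1) = traj sys (sys.A *ᵥ x + sys.B *ᵥ u 0) (fun i => u (i + 1)) k := by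
  induction k with
  | zero => rfl
  | succ k ih =>
    rw [traj, ih]
    rfl

lemma outp_succ {m p : ℕ} (sys : LinSys m p) (x : Fin sys.n → ℝ) (u : ℕ → Fin m → ℝ) (k : ℕ) :
    outp sys x u (k + 1) = outp sys (sys.A *ᵥ x + sys.B *ᵥ u 0) (fun i => u (i + 1)) k := by
  simp only [outp, traj_succ]

/-- Windows of an explained trajectory superpose: the combination with weights `g` of the windows
starting at times `s ∈ Fin M` is the window generated by the combined state and the combined
input. -/
lemma outp_sum {m p : ℕ} (sys : LinSys m p) {T M K : ℕ} (hT : M + K ≤ T)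
    (u : ℕ → Fin m → ℝ) (y : ℕ → Fin p → ℝ) (x : ℕ → Fin sys.n → ℝ)
    (hx : ExplainsWith sys T u y x) (g : Fin M → ℝ) (w : ℕ → Fin m → ℝ)
    (hw : ∀ k ≤ K, w k = ∑ s, g s • u (s + k)) (k : ℕ) (hk : k ≤ K) :
    outp sys (∑ s, g s • x s) w k = ∑ s, g s • y (s + k) := by
  have htraj : ∀ k ≤ K, traj sys (∑ s, g s • x s) w k = ∑ s, g s • x (s + k) := by
    intro k
    induction k with
    | zero => intro _; rfl
    | succ k ih =>
      intro hk
      rw [traj, ih (by omega), hw k (by omega), mulVec_sum, mulVec_sum, ← Finset.sum_add_distrib]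
      refine Finset.sum_congr rfl fun s _ => ?_
      rw [mulVec_smul, mulVec_smul, ← smul_add, ← (hx (s + k) (by omega)).1, add_assoc]
  rw [outp, htraj k hk, hw k hk, mulVec_sum, mulVec_sum, ← Finset.sum_add_distrib]
  refine Finset.sum_congr rfl fun s _ => ?_
  rw [mulVec_smul, mulVec_smul, ← smul_add, ← (hx (s + k) (by omega)).2]

/-! ### Controllability, observability and lag -/

lemma Controllable.eq_top {m p : ℕ} {sys : LinSys m p} (h : Controllable sys)
    (W : Submodule ℝ (Fin sys.n → ℝ)) (hB : ∀ v, sys.B *ᵥ v ∈ W)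
    (hA : ∀ x ∈ W, sys.A *ᵥ x ∈ W) : W = ⊤ := by
  have hk : ∀ (k : ℕ) v, (sys.A ^ k * sys.B) *ᵥ v ∈ W := by
    intro k
    induction k with
    | zero => intro v; simpa using hB v
    | succ k ih =>
      intro v
      rw [pow_succ', Matrix.mul_assoc, ← mulVec_mulVec]
      exact hA _ (ih v)
  have hr : (LinearMap.range (ctrlMat sys sys.n).mulVecLin) = ⊤ := by
    apply Submodule.eq_top_of_finrank_eq
    rw [Module.finrank_fin_fun]
    exact h
  rw [eq_top_iff, ← hr, Matrix.range_mulVecLin, Submodule.span_le]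
  rintro _ ⟨c, rfl⟩
  have := hk c.1 (Pi.single c.2 1)
  rw [mulVec_single_one] at this
  exact this

/-- The unobservable subspace of order `k`: the kernel of the observability matrix with `k` block
rows. -/
def unobs {m p : ℕ} (sys : LinSys m p) (k : ℕ) : Submodule ℝ (Fin sys.n → ℝ) :=
  LinearMap.ker (obsMat sys k).mulVecLin

lemma mem_unobs {m p : ℕ} {sys : LinSys m p} {k : ℕ} {x : Fin sys.n → ℝ} :
    x ∈ unobs sys k ↔ ∀ i < k, (sys.C * sys.A ^ i) *ᵥ x = 0 := by
  rw [unobs, LinearMap.mem_ker, mulVecLin_apply]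
  constructor
  · intro h i hi
    funext j
    exact congrFun h (⟨i, hi⟩, j)
  · intro h
    funext ⟨i, j⟩
    exact congrFun (h i i.2) j

lemma unobs_anti {m p : ℕ} (sys : LinSys m p) {j k : ℕ} (h : j ≤ k) :
    unobs sys k ≤ unobs sys j := by
  intro x hx
  rw [mem_unobs] at hx ⊢
  exact fun i hi => hx i (by omega)

lemma rank_add_unobs {m p : ℕ} (sys : LinSys m p) (k : ℕ) :
    (obsMat sys k).rank + Module.finrank ℝ (unobs sys k) = sys.n := by
  have := LinearMap.finrank_range_add_finrank_ker (obsMat sys k).mulVecLin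
  rwa [Module.finrank_fin_fun] at this

lemma rank_obs_mono {m p : ℕ} (sys : LinSys m p) {j k : ℕ} (h : j ≤ k) :
    (obsMat sys j).rank ≤ (obsMat sys k).rank := by
  have h1 := rank_add_unobs sys j
  have h2 := rank_add_unobs sys k
  have h3 := Submodule.finrank_mono (unobs_anti sys h)
  omega

lemma lag_spec {m p : ℕ} (sys : LinSys m p) :
    (obsMat sys (lag sys + 1)).rank = (obsMat sys (lag sys)).rank := by
  refine Nat.sInf_mem (s := {k | (obsMat sys (k + 1)).rank = (obsMat sys k).rank}) ?_
  by_contra hne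
  rw [Set.not_nonempty_iff_eq_empty, Set.eq_empty_iff_forall_notMem] at hne
  have hk : ∀ k, k ≤ (obsMat sys k).rank := by
    intro k
    induction k with
    | zero => simp
    | succ k ih =>
      have h1 := rank_obs_mono sys (Nat.le_succ k)
      have h2 := hne k
      simp only [Set.mem_ofPred_eq] at h2
      simp only [Nat.succ_eq_add_one] at h1
      omega
  have h1 := hk (sys.n + 1)
  have h2 := rank_add_unobs sys (sys.n + 1)
  omega

/-- Before the lag is reached every further block row increases the rank. -/
lemma rank_obs_add_le {m p : ℕ} (sys : LinSys m p) (k j : ℕ) (h : k + j ≤ lag sys) :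
    (obsMat sys k).rank + j ≤ (obsMat sys (k + j)).rank := by
  induction j with
  | zero => simp
  | succ j ih =>
    have h1 := ih (by omega)
    have h2 := rank_obs_mono sys (Nat.le_succ (k + j))
    have h3 : k + j ∉ {k | (obsMat sys (k + 1)).rank = (obsMat sys k).rank} :=
      Nat.notMem_of_lt_sInf (by rw [← lag]; omega)
    simp only [Set.mem_ofPred_eq] at h3
    simp only [Nat.succ_eq_add_one] at h2
    rw [← add_assoc k j 1]
    omega

/-- The chain of unobservable subspaces is constant from the lag on, so for an observable system
the observability matrix is injective as soon as it has `lag sys` block rows. -/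
lemma unobs_lag {m p : ℕ} {sys : LinSys m p} (h : Observable sys) : unobs sys (lag sys) = ⊥ := by
  have heq : unobs sys (lag sys + 1) = unobs sys (lag sys) := by
    refine Submodule.eq_of_le_of_finrank_eq (unobs_anti sys (Nat.le_succ _)) ?_
    have h1 := rank_add_unobs sys (lag sys)
    have h2 := rank_add_unobs sys (lag sys + 1)
    have h3 := lag_spec sys
    omega
  have hinv : ∀ x ∈ unobs sys (lag sys), sys.A *ᵥ x ∈ unobs sys (lag sys) := by
    intro x hx
    rw [← heq, mem_unobs] at hx
    rw [mem_unobs]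
    intro i hi
    have := hx (i + 1) (by omega)
    rwa [pow_succ, ← Matrix.mul_assoc, ← mulVec_mulVec] at this
  have hbot : unobs sys sys.n = ⊥ := by
    have h1 := rank_add_unobs sys sys.n
    have h2 : (obsMat sys sys.n).rank = sys.n := h
    rw [← Submodule.finrank_eq_zero (R := ℝ)]
    omega
  rw [eq_bot_iff]
  intro x hx
  rw [← hbot, mem_unobs]
  have hpow : ∀ i, (sys.A ^ i) *ᵥ x ∈ unobs sys (lag sys) := by
    intro i
    induction i with
    | zero => simpa using hx
    | succ i ih =>
      rw [pow_succ', ← mulVec_mulVec]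
      exact hinv _ ih
  intro i _
  have h2 := hpow i
  rw [← heq, mem_unobs] at h2
  have := h2 0 (by omega)
  rwa [pow_zero, Matrix.mul_one, mulVec_mulVec] at this

/-! ### Inclusion of restricted behaviours -/

/-- Every trajectory of `s1` of length `K + 1` is also a trajectory of `s2`: for each initial state
and input of `s1` some initial state of `s2` gives the same outputs at times `0, …, K`. -/
def BehaviourLE {m p : ℕ} (s1 s2 : LinSys m p) (K : ℕ) : Prop :=
  ∀ x u, ∃ z, ∀ k ≤ K, outp s1 x u k = outp s2 z u k

lemma BehaviourLE.rank_le {m p : ℕ} {s1 s2 : LinSys m p} {K : ℕ} (h : BehaviourLE s1 s2 K)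
    {k : ℕ} (hk : k ≤ K) : (obsMat s1 k).rank ≤ (obsMat s2 k).rank := by
  refine Submodule.finrank_mono ?_
  rintro _ ⟨x, rfl⟩
  obtain ⟨z, hz⟩ := h x fun _ => 0
  refine ⟨z, ?_⟩
  funext ⟨i, j⟩
  have := hz i (by omega)
  rw [outp_zero_input, outp_zero_input] at this
  exact (congrFun this j).symm

/-- The observability matrix of `s2` with `lag s1` block rows has rank at least `s1.n`, and from there
its rank, which is bounded by `s2.n`, grows with each block row up to `lag s2`. -/
lemma BehaviourLE.lag_le {m p : ℕ} {s1 s2 : LinSys m p} {K : ℕ} (h : BehaviourLE s1 s2 K)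
    (h1 : Observable s1) (hK : lag s1 ≤ K) :
    lag s2 ≤ lag s1 ∨ lag s2 + s1.n ≤ s2.n + lag s1 := by
  by_cases hl : lag s2 ≤ lag s1
  · exact Or.inl hl
  right
  obtain ⟨j, hj⟩ := Nat.exists_eq_add_of_le (le_of_not_ge hl)
  have a := rank_obs_add_le s2 (lag s1) j hj.ge
  have b := h.rank_le hK
  have c := rank_add_unobs s1 (lag s1)
  have d := rank_add_unobs s2 (lag s1 + j)
  rw [unobs_lag h1, finrank_bot] at c
  omega

/-- When the observability matrix of `s2` with `K` block rows is injective, a trajectory of `s1`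
from the zero state can only be matched by the zero state of `s2`. The induction is on `j`, where
the first `K + 1 - j` inputs vanish: prepending one more zero input to `u` reduces `j + 1` to `j`. -/
lemma BehaviourLE.zero {m p : ℕ} {s1 s2 : LinSys m p} {K : ℕ} (h : BehaviourLE s1 s2 K)
    (hinj : unobs s2 K = ⊥) (j : ℕ) :
    ∀ u : ℕ → Fin m → ℝ, (∀ i, i + j < K + 1 → u i = 0) →
      ∀ z, (∀ k ≤ K, outp s1 0 u k = outp s2 z u k) → z = 0 := by
  induction j with
  | zero =>
    intro u hu z hz
    rw [← Submodule.mem_bot ℝ, ← hinj, mem_unobs]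
    intro i hi
    have := hz i hi.le
    rw [outp_congr s1 0 u (fun _ => 0) i fun l hl => hu l (by omega),
      outp_congr s2 z u (fun _ => 0) i fun l hl => hu l (by omega),
      outp_zero_input, outp_zero_input, mulVec_zero] at this
    exact this.symm
  | succ j ih =>
    intro u hu z hz
    let w : ℕ → Fin m → ℝ := fun i => Nat.casesOn i 0 u
    obtain ⟨z', hz'⟩ := h 0 w
    have h0 : z' = 0 := by
      refine ih w (fun i hi => ?_) z' hz'
      cases i with
      | zero => rfl
      | succ i => exact hu i (by omega)
    subst h0
    rw [← Submodule.mem_bot ℝ, ← hinj, mem_unobs]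
    intro i hi
    have e1 := hz' (i + 1) (by omega)
    have hw0 : w 0 = 0 := rfl
    have hw1 : (fun i => w (i + 1)) = u := rfl
    rw [outp_succ, outp_succ, hw0, hw1] at e1
    simp only [mulVec_zero, add_zero] at e1
    have e2 := outp_sub s2 z 0 u i
    rw [← hz i hi.le, e1, sub_self, sub_zero] at e2
    exact e2.symm

/-- Suppose both states are determined by `K` steps of free response and `s2` is controllable. The map
`f` sending `x` to the state of `s2` with the same free response is then an isomorphism of systems;
it is onto because its range is `A`-invariant and contains the range of `B`. -/
lemma BehaviourLE.isomorphic {m p : ℕ} {s1 s2 : LinSys m p} {K : ℕ} (h : BehaviourLE s1 s2 K)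
    (hinj1 : unobs s1 K = ⊥) (hinj2 : unobs s2 K = ⊥) (hc : Controllable s2) :
    Isomorphic s1 s2 ∧ s1.n = s2.n := by
  have hext : ∀ a b : Fin s2.n → ℝ,
      (∀ i < K, (s2.C * s2.A ^ i) *ᵥ a = (s2.C * s2.A ^ i) *ᵥ b) → a = b := by
    intro a b hab
    rw [← sub_eq_zero, ← Submodule.mem_bot ℝ, ← hinj2, mem_unobs]
    intro i hi
    rw [mulVec_sub, hab i hi, sub_self]
  obtain ⟨G, hG⟩ := LinearMap.exists_leftInverse_of_injective (obsMat s2 K).mulVecLin hinj2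
  let f : (Fin s1.n → ℝ) →ₗ[ℝ] (Fin s2.n → ℝ) := G ∘ₗ (obsMat s1 K).mulVecLin
  have hf : ∀ x, ∀ k ≤ K, (s2.C * s2.A ^ k) *ᵥ f x = (s1.C * s1.A ^ k) *ᵥ x := by
    intro x
    obtain ⟨z, hz⟩ := h x fun _ => 0
    simp only [outp_zero_input] at hz
    have hzf : f x = z := by
      have e : (obsMat s1 K).mulVecLin x = (obsMat s2 K).mulVecLin z := by
        funext ⟨i, j⟩
        exact congrFun (hz i i.2.le) j
      change G ((obsMat s1 K).mulVecLin x) = z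
      rw [e]
      exact LinearMap.congr_fun hG z
    rw [hzf]
    exact fun k hk => (hz k hk).symm
  have hzero : ∀ u : ℕ → Fin m → ℝ, ∀ k ≤ K, outp s1 0 u k = outp s2 0 u k := by
    intro u
    obtain ⟨z, hz⟩ := h 0 u
    have := h.zero hinj2 (K + 1) u (fun i hi => by omega) z hz
    subst this
    exact hz
  have hC : ∀ x, s2.C *ᵥ f x = s1.C *ᵥ x := by
    intro x
    simpa using hf x 0 (Nat.zero_le _)
  have hA : ∀ x, f (s1.A *ᵥ x) = s2.A *ᵥ f x := by
    intro x
    refine hext _ _ fun i hi => ?_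
    have := hf x (i + 1) hi
    rw [pow_succ, pow_succ, ← Matrix.mul_assoc, ← Matrix.mul_assoc] at this
    rw [hf _ i hi.le, mulVec_mulVec, mulVec_mulVec, this]
  have hD : ∀ v, s1.D *ᵥ v = s2.D *ᵥ v := by
    intro v
    simpa [outp, traj] using hzero (Pi.single 0 v) 0 (Nat.zero_le _)
  have hB : ∀ v, f (s1.B *ᵥ v) = s2.B *ᵥ v := by
    intro v
    refine hext _ _ fun i hi => ?_
    have := hzero (Pi.single 0 v) (i + 1) hi
    have hs : (fun i : ℕ => (Pi.single 0 v : ℕ → Fin m → ℝ) (i + 1)) = fun _ => 0 := by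
      funext i
      simp
    rw [outp_succ, outp_succ, hs, outp_zero_input, outp_zero_input] at this
    rw [hf _ i hi.le]
    simpa using this
  have finj : LinearMap.ker f = ⊥ := by
    rw [eq_bot_iff]
    intro x hx
    rw [LinearMap.mem_ker] at hx
    rw [← hinj1, mem_unobs]
    intro i hi
    rw [← hf x i hi.le, hx, mulVec_zero]
  have fsurj : LinearMap.range f = ⊤ := by
    refine hc.eq_top _ (fun v => ⟨_, hB v⟩) ?_
    rintro _ ⟨x, rfl⟩
    exact ⟨_, hA x⟩
  let e : (Fin s1.n → ℝ) ≃ₗ[ℝ] (Fin s2.n → ℝ) :=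
    LinearEquiv.ofBijective f ⟨LinearMap.ker_eq_bot.1 finj, LinearMap.range_eq_top.1 fsurj⟩
  have hn : s1.n = s2.n := by simpa using e.finrank_eq
  have hS : ∀ x, LinearMap.toMatrix' f *ᵥ x = f x := fun x => LinearMap.toMatrix'_mulVec f x
  have hS' : ∀ x, LinearMap.toMatrix' e.symm.toLinearMap *ᵥ x = e.symm x :=
    fun x => LinearMap.toMatrix'_mulVec _ x
  refine ⟨⟨?_, LinearMap.toMatrix' f, LinearMap.toMatrix' e.symm.toLinearMap,
    ?_, ?_, ?_, ?_, ?_⟩, hn⟩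
  · exact Matrix.ext_of_mulVec_single fun i => hD _
  · refine Matrix.ext_of_mulVec_single fun i => ?_
    rw [← mulVec_mulVec, hS, hS', one_mulVec]
    exact e.apply_symm_apply _
  · refine Matrix.ext_of_mulVec_single fun i => ?_
    rw [← mulVec_mulVec, hS, hS', one_mulVec]
    exact e.symm_apply_apply _
  · refine Matrix.ext_of_mulVec_single fun i => ?_
    rw [← mulVec_mulVec, ← mulVec_mulVec, hS, hS, hA]
  · refine Matrix.ext_of_mulVec_single fun i => ?_
    rw [← mulVec_mulVec, hS, hB]
  · refine Matrix.ext_of_mulVec_single fun i => ?_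
    rw [← mulVec_mulVec, hS, hC]

lemma Isomorphic.symm {m p : ℕ} {s1 s2 : LinSys m p} (h : Isomorphic s1 s2) :
    Isomorphic s2 s1 := by
  obtain ⟨hD, S, S', h1, h2, hA, hB, hC⟩ := h
  refine ⟨hD.symm, S', S, h2, h1, ?_, ?_, ?_⟩
  · calc S' * s2.A = S' * (s2.A * S) * S' := by
          rw [Matrix.mul_assoc, Matrix.mul_assoc, h1, Matrix.mul_one]
      _ = s1.A * S' := by rw [← hA, ← Matrix.mul_assoc, h2, Matrix.one_mul]
  · rw [← hB, ← Matrix.mul_assoc, h2, Matrix.one_mul]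
  · rw [hC, Matrix.mul_assoc, h1, Matrix.mul_one]

lemma Isomorphic.trans {m p : ℕ} {s1 s2 s3 : LinSys m p} (h : Isomorphic s1 s2)
    (h' : Isomorphic s2 s3) : Isomorphic s1 s3 := by
  obtain ⟨hD, S, S', h1, h2, hA, hB, hC⟩ := h
  obtain ⟨kD, R, R', k1, k2, kA, kB, kC⟩ := h'
  refine ⟨hD.trans kD, R * S, S' * R', ?_, ?_, ?_, ?_, ?_⟩
  · rw [Matrix.mul_assoc, ← Matrix.mul_assoc S, h1, Matrix.one_mul, k1]
  · rw [Matrix.mul_assoc, ← Matrix.mul_assoc R', k2, Matrix.one_mul, h2]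
  · rw [Matrix.mul_assoc, hA, ← Matrix.mul_assoc, kA, Matrix.mul_assoc]
  · rw [Matrix.mul_assoc, hB, kB]
  · rw [hC, kC, Matrix.mul_assoc]

/-! ### Input design -/

/-- The window at time `s`: the state at time `s` together with the inputs at times
`s, …, s + K`. -/
def window {m p : ℕ} (sys : LinSys m p) (x0 : Fin sys.n → ℝ) (K : ℕ) (u : ℕ → Fin m → ℝ) (s : ℕ) :
    (Fin sys.n → ℝ) × (Fin (K + 1) → Fin m → ℝ) :=
  (traj sys x0 u s, fun i => u (s + i))

/-- One time step on windows, feeding a zero as the new last input. -/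
def windowShift {m p : ℕ} (sys : LinSys m p) (K : ℕ) :
    ((Fin sys.n → ℝ) × (Fin (K + 1) → Fin m → ℝ)) →ₗ[ℝ]
      ((Fin sys.n → ℝ) × (Fin (K + 1) → Fin m → ℝ)) where
  toFun c := (sys.A *ᵥ c.1 + sys.B *ᵥ c.2 0,
    fun i => if h : (i : ℕ) + 1 < K + 1 then c.2 ⟨i + 1, h⟩ else 0)
  map_add' c d := by
    ext1
    · simp only [Prod.fst_add, Prod.snd_add, Pi.add_apply, mulVec_add]
      abel
    · funext i
      simp only [Prod.snd_add, Pi.add_apply]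
      split_ifs <;> simp
  map_smul' r c := by
    ext1
    · simp [mulVec_smul]
    · funext i
      simp only [Prod.smul_snd, Pi.smul_apply, RingHom.id_apply]
      split_ifs <;> simp

lemma window_succ {m p : ℕ} (sys : LinSys m p) (x0 : Fin sys.n → ℝ) (K : ℕ) (u : ℕ → Fin m → ℝ)
    (s : ℕ) : window sys x0 K u (s + 1) =
      windowShift sys K (window sys x0 K u s) + (0, Pi.single (Fin.last K) (u (s + 1 + K))) := by
  ext1
  · simp [window, windowShift, traj]
  · funext i
    by_cases h : (i : ℕ) + 1 < K + 1
    · have hi : i ≠ Fin.last K := by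
        rintro rfl
        simp at h
      simp only [window, windowShift, LinearMap.coe_mk, AddHom.coe_mk, Prod.mk_add_mk, Pi.add_apply,
        dif_pos h, Pi.single_eq_of_ne hi, add_zero]
      congr 1
      omega
    · have hi : i = Fin.last K := by
        ext
        simp
        omega
      subst hi
      simp [window, windowShift]

/-- Controllability of the window dynamics: shifting the last input block through the window
reaches every input block, then the range of `B`, then every state. -/
lemma windowShift_eq_top {m p : ℕ} {sys : LinSys m p} (hc : Controllable sys) (K : ℕ)
    (W : Submodule ℝ ((Fin sys.n → ℝ) × (Fin (K + 1) → Fin m → ℝ)))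
    (hE : ∀ v, (0, Pi.single (Fin.last K) v) ∈ W) (hW : ∀ c ∈ W, windowShift sys K c ∈ W) :
    W = ⊤ := by
  have hblock : ∀ j (hj : j ≤ K) (v : Fin m → ℝ),
      ((0, Pi.single ⟨K - j, by omega⟩ v) :
        (Fin sys.n → ℝ) × (Fin (K + 1) → Fin m → ℝ)) ∈ W := by
    intro j
    induction j with
    | zero => intro _ v; exact hE v
    | succ j ih =>
      intro hj v
      have := hW _ (ih (by omega) v)
      convert this using 1
      ext1
      · have h0 : (0 : Fin (K + 1)) ≠ ⟨K - j, by omega⟩ := by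
          intro h
          have := congrArg Fin.val h
          simp at this
          omega
        simp [windowShift, Pi.single_eq_of_ne h0]
      · funext i
        simp only [windowShift, LinearMap.coe_mk, AddHom.coe_mk, Pi.single_apply, Fin.ext_iff]
        split_ifs <;> first | rfl | omega
  have hB : ∀ v, ((sys.B *ᵥ v, 0) : (Fin sys.n → ℝ) × (Fin (K + 1) → Fin m → ℝ)) ∈ W := by
    intro v
    have := hW _ (hblock K le_rfl v)
    convert this using 1
    ext1
    · simp [windowShift]
    · funext i
      simp only [windowShift, LinearMap.coe_mk, AddHom.coe_mk, Pi.single_apply, Fin.ext_iff]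
      split_ifs <;> first | rfl | omega
  have hx : W.comap (LinearMap.inl ℝ (Fin sys.n → ℝ) (Fin (K + 1) → Fin m → ℝ)) = ⊤ := by
    refine hc.eq_top _ hB ?_
    intro x hx
    have := hW _ hx
    change ((sys.A *ᵥ x, 0) : (Fin sys.n → ℝ) × (Fin (K + 1) → Fin m → ℝ)) ∈ W
    convert this using 1
    ext1
    · simp [windowShift]
    · funext i
      simp [windowShift]
  rw [eq_top_iff]
  rintro ⟨x, w⟩ -
  have h1 : (x, 0) ∈ W := by
    have : x ∈ W.comap (LinearMap.inl ℝ (Fin sys.n → ℝ) (Fin (K + 1) → Fin m → ℝ)) := by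
      rw [hx]
      trivial
    exact this
  have h2 : (0, w) ∈ W := by
    have e : LinearMap.inr ℝ (Fin sys.n → ℝ) (Fin (K + 1) → Fin m → ℝ) w
        = ∑ i, LinearMap.inr ℝ (Fin sys.n → ℝ) (Fin (K + 1) → Fin m → ℝ) (Pi.single i (w i)) := by
      rw [← map_sum, Finset.univ_sum_single]
    change LinearMap.inr ℝ (Fin sys.n → ℝ) (Fin (K + 1) → Fin m → ℝ) w ∈ W
    rw [e]
    refine Submodule.sum_mem _ fun i _ => ?_
    have := hblock (K - i) (by omega) (w i)
    have hi : (⟨K - (K - (i : ℕ)), by omega⟩ : Fin (K + 1)) = i := by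
      ext
      simp
      omega
    rw [hi] at this
    exact this
  simpa using W.add_mem h1 h2

/-- Online input design: as long as the windows collected so far do not span the whole space, the
last input of the next window can be chosen so that this window is linearly independent of the
previous ones. -/
lemma exists_input {m p : ℕ} (sys : LinSys m p) (hc : Controllable sys)
    (x0 : Fin sys.n → ℝ) (K t : ℕ) (ht : t ≤ (K + 1) * m + sys.n) :
    ∃ u : ℕ → Fin m → ℝ, LinearIndependent ℝ fun s : Fin t => window sys x0 K u s := by
  induction t with
  | zero => exact ⟨fun _ => 0, linearIndependent_empty_type⟩
  | succ t ih =>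
    obtain ⟨u, hu⟩ := ih (by omega)
    set W := Submodule.span ℝ (Set.range fun s : Fin t => window sys x0 K u s) with hWdef
    let u' : (Fin m → ℝ) → ℕ → Fin m → ℝ := fun v => Function.update u (t + K) v
    -- Only the windows from time `t` on see the input at time `t + K`.
    have hold : ∀ v, ∀ s < t, window sys x0 K (u' v) s = window sys x0 K u s := by
      intro v s hs
      ext1
      · exact traj_congr _ _ _ _ _ fun i hi => Function.update_of_ne (by omega) _ _
      · funext i
        exact Function.update_of_ne (by omega) _ _
    by_cases hex : ∃ v, window sys x0 K (u' v) t ∉ W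
    · obtain ⟨v, hv⟩ := hex
      refine ⟨u' v, ?_⟩
      rw [linearIndependent_finSucc']
      have hinit : Fin.init (fun s : Fin (t + 1) => window sys x0 K (u' v) s)
          = fun s : Fin t => window sys x0 K u s := by
        funext s
        exact hold v s s.2
      rw [hinit]
      exact ⟨hu, by simpa using hv⟩
    · push Not at hex
      exfalso
      have hdiff : ∀ v, window sys x0 K (u' v) t
          = window sys x0 K (u' 0) t + (0, Pi.single (Fin.last K) v) := by
        intro v
        ext1
        · simp only [window, Prod.mk_add_mk, add_zero]
          exact traj_congr _ _ _ _ _ fun i hi => by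
            simp only [u']
            rw [Function.update_of_ne (by omega), Function.update_of_ne (by omega)]
        · funext i
          by_cases hi : i = Fin.last K
          · subst hi
            simp [window, u']
          · have : t + (i : ℕ) ≠ t + K := fun h => hi (by ext; simp; omega)
            simp only [window, u', Prod.mk_add_mk, Pi.add_apply, Pi.single_eq_of_ne hi, add_zero]
            rw [Function.update_of_ne this, Function.update_of_ne this]
      have hE : ∀ v, (0, Pi.single (Fin.last K) v) ∈ W := by
        intro v
        have := W.sub_mem (hex v) (hex 0)
        rwa [hdiff v, add_sub_cancel_left] at this
      have hall : ∀ s ≤ t, window sys x0 K (u' 0) s ∈ W := by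
        intro s hs
        rcases hs.lt_or_eq with h | h
        · rw [hold 0 s h]
          exact Submodule.subset_span ⟨⟨s, h⟩, rfl⟩
        · rw [h]
          exact hex 0
      have hshift : W ≤ W.comap (windowShift sys K) := by
        conv_lhs => rw [hWdef]
        rw [Submodule.span_le]
        rintro _ ⟨s, rfl⟩
        have h1 := hall (s + 1) s.2
        rw [window_succ, hold 0 s s.2] at h1
        have := W.sub_mem h1 (hE (u' 0 (s + 1 + K)))
        rwa [add_sub_cancel_right] at this
      have htop := windowShift_eq_top hc K W hE fun c hc => hshift hc
      have h1 : Module.finrank ℝ W ≤ t := by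
        have := finrank_range_le_card (R := ℝ) fun s : Fin t => window sys x0 K u s
        simpa [Set.finrank] using this
      rw [htop, finrank_top, Module.finrank_prod, Module.finrank_fin_fun, Module.finrank_pi_fintype]
        at h1
      simp at h1
      omega

/-- Data containing a spanning set of windows force every explaining system to reproduce the
restricted behaviour of the true system. -/
lemma behaviourLE_of_span {m p : ℕ} {s1 s2 : LinSys m p} {K M T : ℕ} (hT : M + K ≤ T)
    (x0 : Fin s1.n → ℝ) (u : ℕ → Fin m → ℝ)
    (hspan : Submodule.span ℝ (Set.range fun s : Fin M => window s1 x0 K u s) = ⊤)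
    (h2 : Explains s2 T u (outp s1 x0 u)) : BehaviourLE s1 s2 K := by
  intro x w
  obtain ⟨z, hz⟩ := h2
  have hmem : ((x, fun i => w i) : (Fin s1.n → ℝ) × (Fin (K + 1) → Fin m → ℝ)) ∈
      Submodule.span ℝ (Set.range fun s : Fin M => window s1 x0 K u s) := by
    rw [hspan]
    trivial
  obtain ⟨g, hg⟩ := (Submodule.mem_span_range_iff_exists_fun ℝ).1 hmem
  have hgx : ∑ s, g s • traj s1 x0 u s = x := by
    have := congrArg Prod.fst hg
    simpa [Prod.fst_sum, window] using this
  have hgw : ∀ k ≤ K, w k = ∑ s, g s • u (s + k) := by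
    intro k hk
    have := congrFun (congrArg Prod.snd hg) ⟨k, by omega⟩
    simpa [Prod.snd_sum, window] using this.symm
  refine ⟨∑ s, g s • z s, fun k hk => ?_⟩
  rw [outp_sum s2 hT u _ z hz g w hgw k hk, ← hgx]
  exact outp_sum s1 hT u (outp s1 x0 u) (traj s1 x0 u) (fun s _ => ⟨rfl, rfl⟩) g w hgw k hk

/-- **Theorem 2 (existence of a shortest informative experiment).** For any
minimal true system with `ℓ_true ≤ L`, `n_true ≤ N`, and any initial state
`x₀`, there is an input sequence of length
`T = L^a + (L^a + 1)m + n_true` (with `L^a = min(L, N - n_true + ℓ_true)`)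
such that the resulting input-output data are informative for system
identification. -/
theorem shortest_experiment_exists {m p : ℕ} (hm : 1 ≤ m) (hp : 1 ≤ p)
    (sysT : LinSys m p) (hmin : MinimalSys sysT)
    (L N : ℕ) (hL : lag sysT ≤ L) (hN : sysT.n ≤ N)
    (x0 : Fin sysT.n → ℝ) :
    ∃ (u : ℕ → Fin m → ℝ) (x : ℕ → Fin sysT.n → ℝ) (y : ℕ → Fin p → ℝ),
      x 0 = x0 ∧
      (∀ s, x (s + 1) = sysT.A.mulVec (x s) + sysT.B.mulVec (u s)) ∧
      (∀ s, y s = sysT.C.mulVec (x s) + sysT.D.mulVec (u s)) ∧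
      Informative
        (min L (N - sysT.n + lag sysT) +
          (min L (N - sysT.n + lag sysT) + 1) * m + sysT.n)
        u y sysT.n L N := by
  set K := min L (N - sysT.n + lag sysT) with hK
  obtain ⟨u, hu⟩ := exists_input sysT hmin.1 x0 K ((K + 1) * m + sysT.n) le_rfl
  have hspan := hu.span_eq_top_of_card_eq_finrank' (by
    rw [Module.finrank_prod, Module.finrank_fin_fun, Module.finrank_pi_fintype]
    simp [add_comm])
  refine ⟨u, traj sysT x0 u, outp sysT x0 u, rfl, fun _ => rfl, fun _ => rfl, ?_⟩
  have hlagT : lag sysT ≤ K := by omega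
  have key : ∀ s ∈ ExplSet (K + (K + 1) * m + sysT.n) u (outp sysT x0 u) ∩ Mset m p ∩ SLN m p L N,
      Isomorphic sysT s ∧ sysT.n = s.n := by
    rintro s ⟨⟨hs, hsc, hso⟩, hsL, hsN⟩
    have hle : BehaviourLE sysT s K :=
      behaviourLE_of_span (M := (K + 1) * m + sysT.n) (by omega) x0 u hspan hs
    have hlag : lag s ≤ K := by
      have := hle.lag_le hmin.2 hlagT
      omega
    refine hle.isomorphic ?_ ?_ hsc
    · exact eq_bot_iff.2 ((unobs_anti sysT hlagT).trans (unobs_lag hmin.2).le)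
    · exact eq_bot_iff.2 ((unobs_anti s hlag).trans (unobs_lag hso).le)
  refine ⟨?_, fun s1 h1 s2 h2 => (key s1 h1).1.symm.trans (key s2 h2).1⟩
  ext s
  constructor
  · intro hs
    exact ⟨⟨⟨hs.1.1, (key s hs).2.symm⟩, hs.1.2⟩, hs.2⟩
  · rintro ⟨⟨⟨h1, -⟩, h2⟩, h3⟩
    exact ⟨⟨h1, h2⟩, h3⟩
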